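/- Let q = 2^h, let 2 < t < q, and let A be a KM-arc of type t in PG(2,q) whose t-nucleus is the point N = (0:0:1). Then A is an elation KM-arc with elation line ℓ∞ : X = 0 if and only if there exists a subgroup S of the additive group (F_q,+) of order t such that for every α ∈ F_q the set {z ∈ F_q : (1:α:z) ∈ A} is either empty or a coset of S in (F_q,+). -/

import Mathlib

open scoped Classical

noncomputable section

variable {K : Type*} [Field K]

/-- The absolute trace-style sum `x + x² + x⁴ + ⋯ + x^(2^(h-1))`
(it lands in the prime subfield `F₂` when `|K| = 2^h`). -/
def Tr (h : ℕ) (x : K) : K := ∑ i ∈ Finset.range h, x ^ 2 ^ i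

/-- `F₂`-independence of a tuple of elements of a field of characteristic two:
no nontrivial combination with coefficients `0`/`1` vanishes. -/
def F2Indep {n : ℕ} (v : Fin n → K) : Prop :=
  ∀ c : Fin n → K, (∀ i, c i = 0 ∨ c i = 1) → ∑ i, c i * v i = 0 → ∀ i, c i = 0

/-- The `F₂`-span of a tuple of elements of a field of characteristic two. -/
def F2Span {n : ℕ} (v : Fin n → K) : Set K :=
  {x | ∃ c : Fin n → K, (∀ i, c i = 0 ∨ c i = 1) ∧ x = ∑ i, c i * v i}

/-- `α·S` for an additive subgroup `S` of the field. -/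
def smulSub (α : K) (S : AddSubgroup K) : AddSubgroup K :=
  S.map (AddMonoidHom.mulLeft α)

/-- Points of `PG(2,q)`: one-dimensional subspaces of `K³`. -/
abbrev Pt (K : Type*) [Field K] := Projectivization K (Fin 3 → K)

/-- The point `(a : b : c)` of `PG(2,q)`. -/
def pt3 (a b c : K) (habc : ¬(a = 0 ∧ b = 0 ∧ c = 0)) : Pt K :=
  Projectivization.mk K ![a, b, c] (fun h0 => habc
    ⟨by simpa using congrFun h0 0, by simpa using congrFun h0 1, by simpa using congrFun h0 2⟩)

/-- The point `(a : b)` of `PG(1,q)`. -/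
def pt2 (a b : K) (hab : ¬(a = 0 ∧ b = 0)) : Projectivization K (Fin 2 → K) :=
  Projectivization.mk K ![a, b] (fun h0 => hab
    ⟨by simpa using congrFun h0 0, by simpa using congrFun h0 1⟩)

/-- An `F₂`-linear set of points of `PG(1,q)`: in characteristic two, the
`F₂`-subspaces of `K²` are exactly its additive subgroups. -/
def IsF2Linear (T : Set (Projectivization K (Fin 2 → K))) : Prop :=
  ∃ U : AddSubgroup (Fin 2 → K),
    T = {P | ∃ u : Fin 2 → K, ∃ hu : u ≠ 0, u ∈ U ∧ Projectivization.mk K u hu = P}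

/-- Lines of `PG(2,q)`: two-dimensional subspaces of `K³`. -/
def IsLine (L : Submodule K (Fin 3 → K)) : Prop := Module.finrank K L = 2

/-- Incidence of a point with a line. -/
def OnLine (P : Pt K) (L : Submodule K (Fin 3 → K)) : Prop := P.submodule ≤ L

/-- The number of points of `A` lying on the line `L`. -/
def secantCount (A : Set (Pt K)) (L : Submodule K (Fin 3 → K)) : ℕ :=
  {P ∈ A | OnLine P L}.ncard

/-- A KM-arc of type `t`: `q+t` points meeting every line in `0`, `2` or `t` points. -/
def IsKMArc (q t : ℕ) (A : Set (Pt K)) : Prop :=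
  A.ncard = q + t ∧ ∀ L : Submodule K (Fin 3 → K), IsLine L →
    secantCount A L = 0 ∨ secantCount A L = 2 ∨ secantCount A L = t

/-- The projectivity of `PG(2,q)` induced by an element of `GL(3,q)`. -/
def projMap (f : (Fin 3 → K) ≃ₗ[K] (Fin 3 → K)) : Pt K → Pt K :=
  Projectivization.map f.toLinearMap f.injective

/-- `f` induces an elation with axis `L` and centre `R`: it fixes every point of `L`
and maps every line through `R` to itself. -/
def IsElation (f : (Fin 3 → K) ≃ₗ[K] (Fin 3 → K)) (L : Submodule K (Fin 3 → K))
    (R : Pt K) : Prop :=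
  IsLine L ∧ OnLine R L ∧ (∀ P : Pt K, OnLine P L → projMap f P = P) ∧
    ∀ M : Submodule K (Fin 3 → K), IsLine M → OnLine R M →
      ∀ P : Pt K, OnLine P M → OnLine (projMap f P) M

/-- `f` induces an elation with axis `L` (for some centre on `L`). -/
def IsElationAxis (f : (Fin 3 → K) ≃ₗ[K] (Fin 3 → K)) (L : Submodule K (Fin 3 → K)) : Prop :=
  ∃ R : Pt K, IsElation f L R

/-- The projectivity induced by `f` stabilises the point set `A`. -/
def Stabilises (f : (Fin 3 → K) ≃ₗ[K] (Fin 3 → K)) (A : Set (Pt K)) : Prop :=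
  projMap f '' A = A

/-- `N` lies on every `t`-secant of `A` (i.e. `N` is the `t`-nucleus). -/
def IsNucleus (t : ℕ) (A : Set (Pt K)) (N : Pt K) : Prop :=
  ∀ L : Submodule K (Fin 3 → K), IsLine L → secantCount A L = t → OnLine N L

/-- An elation KM-arc of type `t` with `t`-nucleus `N` and elation line `linf`:
for every `t`-secant `L ≠ linf`, the group of elations with axis `linf` stabilising `A`
acts transitively on `A ∩ L`. -/
def IsElationKMArc (q t : ℕ) (A : Set (Pt K)) (N : Pt K)
    (linf : Submodule K (Fin 3 → K)) : Prop :=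
  IsKMArc q t A ∧ IsLine linf ∧ OnLine N linf ∧ IsNucleus t A N ∧
    ∀ L : Submodule K (Fin 3 → K), IsLine L → secantCount A L = t → L ≠ linf →
      ∀ P ∈ A, OnLine P L → ∀ Q ∈ A, OnLine Q L →
        ∃ f : (Fin 3 → K) ≃ₗ[K] (Fin 3 → K),
          IsElationAxis f linf ∧ Stabilises f A ∧ projMap f P = Q

/-- A translation KM-arc with translation line `l`: the group of elations with axis `l`
stabilising `A` acts transitively on `A \ l`. -/
def IsTranslationKMArc (A : Set (Pt K)) (l : Submodule K (Fin 3 → K)) : Prop :=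
  IsLine l ∧ ∀ P ∈ A, ¬OnLine P l → ∀ Q ∈ A, ¬OnLine Q l →
    ∃ f : (Fin 3 → K) ≃ₗ[K] (Fin 3 → K),
      IsElationAxis f l ∧ Stabilises f A ∧ projMap f P = Q

/-- The line `X = 0` of `PG(2,q)`. -/
def lineX0 (K : Type*) [Field K] : Submodule K (Fin 3 → K) :=
  LinearMap.ker (LinearMap.proj (R := K) (φ := fun _ : Fin 3 => K) 0)

/-- The line `Y = aX` of `PG(2,q)`. -/
def lineYaX (a : K) : Submodule K (Fin 3 → K) where
  carrier := {v | v 1 = a * v 0}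
  add_mem' := by
    intro v w hv hw
    simp only [Set.mem_setOf_eq, Pi.add_apply] at hv hw ⊢
    rw [hv, hw]; ring
  zero_mem' := by simp
  smul_mem' := by
    intro c v hv
    simp only [Set.mem_setOf_eq, Pi.smul_apply, smul_eq_mul] at hv ⊢
    rw [hv]; ring

/-- The point set of the `q/8`-construction (Theorem 4.4 of the paper), built from
`F₂`-independent `a 0, a 1, a 2` and coset representatives `b 0, b 1, b 2`. -/
def q8Arc (h : ℕ) (a b : Fin 3 → K) : Set (Pt K) :=
  {P | ∃ x : K, (∀ i, Tr h (a i ^ 2 * x) = 0) ∧ P = pt3 0 1 x (by simp)}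
    ∪ {P | ∃ l : Fin 3 → K, (∀ i, l i = 0 ∨ l i = 1) ∧ ∃ s : K, (∀ i, Tr h (a i * s) = 0) ∧
        P = pt3 1 (l 0 * a 0 + l 1 * a 1 + l 2 * a 2)
          ((l 0 + l 1 + l 2 + l 1 * l 2) * b 0 + (l 1 + l 2 + l 0 * l 2) * b 1
            + (l 2 + l 0 * l 1) * b 2 + s) (by simp)}

/-- The point set of the `q/16`-construction (Theorem 5.2 of the paper). -/
def q16Arc (h : ℕ) (a : Fin 4 → K) (α : K) (b : Fin 3 → K) : Set (Pt K) :=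
  {P | ∃ x : K, Tr h (a 0 * (a 0 + a 3) * x) = 0 ∧ Tr h (a 1 * (a 1 + a 3) * x) = 0 ∧
      Tr h (a 2 * (a 2 + a 3) * x) = 0 ∧ Tr h (a 3 * α * x) = 1 ∧ P = pt3 0 1 x (by simp)}
    ∪ {P | ∃ l : Fin 4 → K, (∀ i, l i = 0 ∨ l i = 1) ∧ ∃ s : K, (∀ i, Tr h (a i * s) = 0) ∧
        P = pt3 1 (l 0 * a 0 + l 1 * a 1 + l 2 * a 2 + l 3 * a 3)
          ((l 0 + l 1 + l 2 + l 1 * l 2) * b 0 + (l 1 + l 2 + l 0 * l 2) * b 1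
            + (l 2 + l 0 * l 1) * b 2 + s) (by simp)}

/-- The semilinear collineation of `PG(2,q)` sending the point spanned by `v`
to the point spanned by `M (ψ ∘ v)`. -/
def frobMap (ψ : K ≃+* K) (M : (Fin 3 → K) ≃ₗ[K] (Fin 3 → K)) (P : Pt K) : Pt K :=
  Projectivization.mk K (M fun i => ψ (P.rep i)) (by
    rw [LinearEquiv.map_ne_zero_iff]
    intro h0
    apply P.rep_nonzero
    funext i
    have h2 : P.rep i = 0 := ψ.injective (by rw [map_zero]; exact congrFun h0 i)
    simpa using h2)

/-!
Let `A` be a KM-arc of type `t > 2` in `PG(2, q)`. Counting the other `q + t - 1` points of `A`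
along the `q + 1` lines through a point of `A` shows that exactly one of these lines is a
`t`-secant. Hence the `t`-nucleus `N` is not in `A`, and each line `Y = aX` meets `A` in `0` or `t`
points.

An elation with axis `X = 0` acts on the affine plane `X ≠ 0` as a translation. If it maps a point
of the line `Y = aX` to a point of the same line, it is a translation `(y, z) ↦ (y, z + s)`. Those
`s` that stabilise `A` form the group `G` of all translations of `K` preserving every set
`{z | (1 : a : z) ∈ A}`. So `A` is an elation KM-arc with elation line `X = 0` exactly when `G` is
transitive on each of these sets, that is, when the nonempty ones are cosets of `G`.
-/

section ProjectiveSpace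

variable {V : Type*} [AddCommGroup V] [Module K V]

theorem finrank_submodule_sup_submodule {P Q : Projectivization K V} (h : P ≠ Q) :
    Module.finrank K ↑(P.submodule ⊔ Q.submodule) = 2 := by
  have hdisj : P.submodule ⊓ Q.submodule = ⊥ :=
    ((Submodule.isAtom_iff_finrank_eq_one.2 P.finrank_submodule).disjoint_of_ne
      (Submodule.isAtom_iff_finrank_eq_one.2 Q.finrank_submodule)
      (Projectivization.submodule_injective.ne h)).eq_bot
  have hdim := Submodule.finrank_sup_add_finrank_inf_eq P.submodule Q.submodule
  rwa [hdisj, finrank_bot, P.finrank_submodule, Q.finrank_submodule] at hdim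

theorem finrank_comap_mkQ [FiniteDimensional K V] (U : Submodule K V)
    (W : Submodule K (V ⧸ U)) :
    Module.finrank K (W.comap U.mkQ) = Module.finrank K W + Module.finrank K U := by
  rw [← (U.mkQ.domRestrict (W.comap U.mkQ)).finrank_range_add_finrank_ker,
    LinearMap.range_domRestrict, Submodule.map_comap_eq_of_surjective U.mkQ_surjective,
    LinearMap.ker_domRestrict, Submodule.ker_mkQ,
    (Submodule.comapSubtypeEquivOfLe (U.le_comap_mkQ W)).finrank_eq]

theorem exists_forall_mem_apply_eq_smul {f : V →ₗ[K] V} {W : Submodule K V}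
    (h : ∀ w ∈ W, ∃ a : K, f w = a • w) : ∃ a : K, ∀ w ∈ W, f w = a • w := by
  have hW : ∀ w ∈ W, f w ∈ W := fun w hw ↦ by
    obtain ⟨a, ha⟩ := h w hw
    exact ha ▸ W.smul_mem a hw
  obtain ⟨a, ha⟩ :=
    (f.restrict hW).exists_eq_smul_id_of_forall_notLinearIndependent fun w hw ↦ by
      obtain ⟨b, hb⟩ := h w w.2
      exact (LinearIndependent.pair_iff' (hw.ne_zero 0)).1 hw b (Subtype.ext hb.symm)
  exact ⟨a, fun w hw ↦ congrArg Subtype.val (LinearMap.congr_fun ha ⟨w, hw⟩)⟩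

end ProjectiveSpace

section Incidence

variable {P Q : Pt K} {L M : Submodule K (Fin 3 → K)}

theorem onLine_mk {v : Fin 3 → K} (hv : v ≠ 0) :
    OnLine (Projectivization.mk K v hv) L ↔ v ∈ L := by
  rw [OnLine, Projectivization.submodule_mk, Submodule.span_singleton_le_iff_mem]

theorem onLine_iff_rep_mem : OnLine P L ↔ P.rep ∈ L := by
  rw [← onLine_mk P.rep_nonzero, P.mk_rep]

theorem isLine_sup (h : P ≠ Q) : IsLine (P.submodule ⊔ Q.submodule) :=
  finrank_submodule_sup_submodule h

theorem IsLine.eq_sup (hL : IsLine L) (h : P ≠ Q) (hP : OnLine P L) (hQ : OnLine Q L) :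
    L = P.submodule ⊔ Q.submodule :=
  (Submodule.eq_of_le_of_finrank_eq (sup_le hP hQ) ((isLine_sup h).trans hL.symm)).symm

theorem IsLine.eq_of_onLine (hL : IsLine L) (hM : IsLine M) (h : P ≠ Q) (hPL : OnLine P L)
    (hQL : OnLine Q L) (hPM : OnLine P M) (hQM : OnLine Q M) : L = M :=
  (hL.eq_sup h hPL hQL).trans (hM.eq_sup h hPM hQM).symm

theorem isLine_ker {φ : Module.Dual K (Fin 3 → K)} (hφ : φ ≠ 0) : IsLine (LinearMap.ker φ) := by
  have hdim := Module.Dual.finrank_ker_add_one_of_ne_zero hφ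
  rw [Module.finrank_fin_fun] at hdim
  exact Nat.succ_injective hdim

end Incidence

section Counting

variable [Finite K]

/-- The pencil of lines through the point `P`. -/
def pencil (P : Pt K) : Finset (Submodule K (Fin 3 → K)) :=
  (Set.toFinite {L | IsLine L ∧ OnLine P L}).toFinset

theorem mem_pencil {P : Pt K} {L : Submodule K (Fin 3 → K)} :
    L ∈ pencil P ↔ IsLine L ∧ OnLine P L := by
  simp [pencil]

theorem card_pencil (P : Pt K) : (pencil P).card = Nat.card K + 1 := by
  have hquot : Module.finrank K ((Fin 3 → K) ⧸ P.submodule) = 2 := by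
    have hdim := P.submodule.finrank_quotient_add_finrank
    rw [P.finrank_submodule, Module.finrank_fin_fun] at hdim
    exact Nat.succ_injective hdim
  have hline (W : Submodule K ((Fin 3 → K) ⧸ P.submodule)) :
      IsLine (W.comap P.submodule.mkQ) ↔ Module.finrank K W = 1 := by
    rw [IsLine, finrank_comap_mkQ, P.finrank_submodule, Nat.succ_inj]
  let lineOfDirection (D : Projectivization K ((Fin 3 → K) ⧸ P.submodule)) : pencil P :=
    ⟨D.submodule.comap P.submodule.mkQ,
      mem_pencil.2 ⟨(hline _).2 D.finrank_submodule, P.submodule.le_comap_mkQ _⟩⟩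
  have hbij : Function.Bijective lineOfDirection := by
    refine ⟨fun D E h ↦ ?_, fun ⟨L, hL⟩ ↦ ?_⟩
    · exact Projectivization.submodule_injective <|
        Submodule.comap_injective_of_surjective P.submodule.mkQ_surjective
          (congrArg Subtype.val h)
    · obtain ⟨hL, hPL⟩ := mem_pencil.1 hL
      have hcomap : (L.map P.submodule.mkQ).comap P.submodule.mkQ = L := by
        rw [Submodule.comap_map_mkQ, sup_eq_right.2 hPL]
      have hfin : Module.finrank K (L.map P.submodule.mkQ) = 1 := by
        rwa [← hline, hcomap]
      exact ⟨Projectivization.mk'' _ hfin, Subtype.ext (by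
        simp only [lineOfDirection, Projectivization.submodule_mk'', hcomap])⟩
  rw [← Projectivization.card_of_finrank_two K _ hquot, Nat.card_eq_of_bijective _ hbij,
    Nat.card_eq_fintype_card, Fintype.card_coe]

theorem sum_pencil_secantCount_sub_one {A : Set (Pt K)} {P : Pt K} (hP : P ∈ A) :
    ∑ L ∈ pencil P, (secantCount A L - 1) = A.ncard - 1 := by
  let others : Finset (Pt K) := (Set.toFinite (A \ {P})).toFinset
  have mem_others {Q : Pt K} : Q ∈ others ↔ Q ∈ A ∧ Q ≠ P := by simp [others]
  have hjoin : (others : Set (Pt K)).MapsTo (fun Q ↦ P.submodule ⊔ Q.submodule) (pencil P) :=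
    fun Q hQ ↦ mem_pencil.2 ⟨isLine_sup (mem_others.1 hQ).2.symm, le_sup_left⟩
  rw [← Set.ncard_sdiff_singleton_of_mem hP, Set.ncard_eq_toFinset_card _,
    Finset.card_eq_sum_card_fiberwise hjoin]
  refine Finset.sum_congr rfl fun L hL ↦ ?_
  obtain ⟨hL, hPL⟩ := mem_pencil.1 hL
  have hPA : P ∈ {Q ∈ A | OnLine Q L} := ⟨hP, hPL⟩
  rw [secantCount, ← Set.ncard_sdiff_singleton_of_mem hPA, ← Set.ncard_coe_finset]
  congr 1
  ext Q
  simp only [Set.mem_sdiff, Set.mem_ofPred_eq, Set.mem_singleton_iff, Finset.coe_filter, mem_others]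
  constructor
  · rintro ⟨⟨hQA, hQL⟩, hQP⟩
    exact ⟨⟨hQA, hQP⟩, (hL.eq_sup (Ne.symm hQP) hPL hQL).symm⟩
  · rintro ⟨⟨hQA, hQP⟩, rfl⟩
    exact ⟨⟨hQA, le_sup_right⟩, hQP⟩

variable {t : ℕ} {A : Set (Pt K)}

theorem IsKMArc.existsUnique_tSecant (ht : 2 < t) (hA : IsKMArc (Nat.card K) t A) {P : Pt K}
    (hP : P ∈ A) : ∃! L, IsLine L ∧ OnLine P L ∧ secantCount A L = t := by
  let tSecants : Finset (Submodule K (Fin 3 → K)) := {L ∈ pencil P | secantCount A L = t}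
  have hcount : ∀ L ∈ pencil P,
      secantCount A L - 1 = 1 + if secantCount A L = t then t - 2 else 0 := by
    intro L hL
    obtain ⟨hL, hPL⟩ := mem_pencil.1 hL
    have hpos : secantCount A L ≠ 0 := Set.ncard_ne_zero_of_mem ⟨hP, hPL⟩
    rcases hA.2 L hL with h | h | h
    · exact absurd h hpos
    · simp [h, ht.ne]
    · simp only [h, if_true]
      omega
  have hsum : (Nat.card K + 1) + tSecants.card * (t - 2) = Nat.card K + t - 1 := by
    rw [← hA.1, ← sum_pencil_secantCount_sub_one hP, Finset.sum_congr rfl hcount,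
      Finset.sum_add_distrib, Finset.sum_const, card_pencil, ← Finset.sum_filter,
      Finset.sum_const, smul_eq_mul, smul_eq_mul, mul_one]
  have hone : tSecants.card = 1 :=
    Nat.eq_of_mul_eq_mul_right (by omega : 0 < t - 2) (by omega)
  obtain ⟨L, hL⟩ := Finset.card_eq_one.1 hone
  have hmem (M : Submodule K (Fin 3 → K)) :
      (IsLine M ∧ OnLine P M ∧ secantCount A M = t) ↔ M = L := by
    rw [← Finset.mem_singleton (b := M), ← hL, Finset.mem_filter, mem_pencil, and_assoc]
  exact ⟨L, (hmem L).2 rfl, fun M ↦ (hmem M).1⟩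

theorem IsKMArc.exists_not_onLine (ht : 2 < t) (hA : IsKMArc (Nat.card K) t A)
    {L : Submodule K (Fin 3 → K)} (hL : IsLine L) : ∃ P ∈ A, ¬OnLine P L := by
  by_contra! hAL
  have hcount : secantCount A L = Nat.card K + t := by
    rw [secantCount, Set.sep_eq_self_iff_mem_true.2 hAL, hA.1]
  have hq : 0 < Nat.card K := Nat.card_pos
  have := hA.2 L hL
  omega

theorem IsKMArc.nucleus_notMem (ht : 2 < t) (hA : IsKMArc (Nat.card K) t A) {N : Pt K}
    (hN : IsNucleus t A N) : N ∉ A := by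
  intro hNA
  obtain ⟨L, ⟨hL, -, -⟩, hunique⟩ := hA.existsUnique_tSecant ht hNA
  obtain ⟨P, hPA, hPL⟩ := hA.exists_not_onLine ht hL
  obtain ⟨M, ⟨hM, hPM, hMt⟩, -⟩ := hA.existsUnique_tSecant ht hPA
  exact hPL (hunique M ⟨hM, hN M hM hMt, hMt⟩ ▸ hPM)

theorem IsNucleus.secantCount_eq {N P : Pt K} (hN : IsNucleus t A N) (ht : 2 < t)
    (hA : IsKMArc (Nat.card K) t A) (hP : P ∈ A) {L : Submodule K (Fin 3 → K)} (hL : IsLine L)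
    (hNL : OnLine N L) (hPL : OnLine P L) : secantCount A L = t := by
  obtain ⟨M, ⟨hM, hPM, hMt⟩, -⟩ := hA.existsUnique_tSecant ht hP
  have hPN : P ≠ N := fun h ↦ hA.nucleus_notMem ht hN (h ▸ hP)
  rwa [hL.eq_of_onLine hM hPN hPL hNL hPM (hN M hM hMt)]

end Counting

section Elation

variable {f : (Fin 3 → K) ≃ₗ[K] (Fin 3 → K)} {L : Submodule K (Fin 3 → K)} {R : Pt K}
  {φ : Module.Dual K (Fin 3 → K)} {w : Fin 3 → K}

theorem projMap_mk (f : (Fin 3 → K) ≃ₗ[K] (Fin 3 → K)) {v : Fin 3 → K} (hv : v ≠ 0) :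
    projMap f (Projectivization.mk K v hv) =
      Projectivization.mk K (f v) (f.map_ne_zero_iff.2 hv) := rfl

theorem projMap_surjective (f : (Fin 3 → K) ≃ₗ[K] (Fin 3 → K)) :
    Function.Surjective (projMap f) := fun P ↦
  ⟨Projectivization.mk K (f.symm P.rep) (f.symm.map_ne_zero_iff.2 P.rep_nonzero), by
    simp [projMap_mk]⟩

theorem stabilises_iff {A : Set (Pt K)} : Stabilises f A ↔ ∀ P, projMap f P ∈ A ↔ P ∈ A := by
  have hbij : Function.Bijective (projMap f) :=
    ⟨Projectivization.map_injective _ _, projMap_surjective f⟩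
  rw [Stabilises, eq_comm, ← Set.preimage_eq_iff_eq_image hbij, Set.ext_iff]
  rfl

theorem IsElation.exists_apply_eq_smul (hf : IsElation f L R) {v : Fin 3 → K} (hv : v ∈ L) :
    ∃ a : K, f v = a • v := by
  by_cases hv0 : v = 0
  · exact ⟨0, by simp [hv0]⟩
  have hfix := hf.2.2.1 _ ((onLine_mk hv0).2 hv)
  rw [projMap_mk, Projectivization.mk_eq_mk_iff'] at hfix
  exact hfix.imp fun _ ↦ Eq.symm

theorem IsElation.exists_apply_eq_smul_add (hf : IsElation f L R) {v : Fin 3 → K} (hv : v ∉ L) :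
    ∃ a b : K, f v = a • v + b • R.rep := by
  have hv0 : v ≠ 0 := fun h ↦ hv (h ▸ L.zero_mem)
  have hPR : Projectivization.mk K v hv0 ≠ R := fun h ↦ hv ((onLine_mk hv0).1 (h ▸ hf.2.1))
  have hfv := hf.2.2.2 _ (isLine_sup hPR) le_sup_right _ le_sup_left
  rw [projMap_mk, onLine_mk, Projectivization.submodule_mk, R.submodule_eq,
    ← Submodule.span_insert, Submodule.mem_span_pair] at hfv
  obtain ⟨a, b, h⟩ := hfv
  exact ⟨a, b, h.symm⟩

theorem IsElation.exists_forall_apply_eq_smul_add (hf : IsElation f (LinearMap.ker φ) R) :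
    ∃ c : K, ∃ w ∈ LinearMap.ker φ, ∀ v, f v = c • v + φ v • w := by
  have hr : φ R.rep = 0 := onLine_iff_rep_mem.1 hf.2.1
  obtain ⟨c, hc⟩ := exists_forall_mem_apply_eq_smul (f := f.toLinearMap)
    fun v hv ↦ hf.exists_apply_eq_smul hv
  have hφ : φ ≠ 0 := by
    rintro rfl
    have hdim := hf.1
    rw [IsLine, LinearMap.ker_zero, finrank_top, Module.finrank_fin_fun] at hdim
    omega
  obtain ⟨e, he⟩ := LinearMap.surjective hφ 1
  obtain ⟨a, b, hfe⟩ : ∃ a b : K, f e = a • e + b • R.rep :=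
    hf.exists_apply_eq_smul_add (by simp [he])
  -- Compare `f e`, `f u` and `f (e + u)` for a vector `u` on the axis outside the centre.
  have hac : a = c := by
    have hlt : R.submodule < LinearMap.ker φ := hf.2.1.lt_of_ne fun h ↦ by
      have hdim := hf.1
      rw [← h, IsLine, R.finrank_submodule] at hdim
      omega
    obtain ⟨u, hu, huR⟩ := SetLike.exists_of_lt hlt
    have hφu : φ u = 0 := hu
    have hfu : f u = c • u := hc u hu
    obtain ⟨a', b', h⟩ : ∃ a' b' : K, f (e + u) = a' • (e + u) + b' • R.rep :=
      hf.exists_apply_eq_smul_add (by simp [he, hφu])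
    rw [map_add, hfe, hfu] at h
    have ha : a = a' := by simpa [he, hr, hφu] using congrArg φ h
    subst ha
    by_contra hne
    have hsmul : (c - a) • u = (b' - b) • R.rep := by linear_combination (norm := module) h
    refine huR ?_
    rw [← Submodule.smul_mem_iff _ (sub_ne_zero.2 (Ne.symm hne)), hsmul]
    exact Submodule.smul_mem _ _ (onLine_iff_rep_mem.1 le_rfl)
  refine ⟨c, b • R.rep, by simp [hr], fun v ↦ ?_⟩
  have hv : f (v - φ v • e) = c • (v - φ v • e) := hc _ (by simp [he])
  rw [map_sub, map_smul, hfe, hac] at hv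
  linear_combination (norm := module) hv

theorem isElation_transvection (hφ : φ ≠ 0) (hw : φ w = 0)
    (hR : OnLine R (LinearMap.ker φ)) (hwR : w ∈ R.submodule) :
    IsElation (LinearEquiv.transvection hw) (LinearMap.ker φ) R := by
  refine ⟨isLine_ker hφ, hR, fun P hP ↦ ?_, fun M _ hRM P hP ↦ ?_⟩
  · induction P using Projectivization.ind with | h v hv =>
    rw [onLine_mk] at hP
    have hPv : φ v = 0 := hP
    rw [projMap_mk, Projectivization.mk_eq_mk_iff']
    exact ⟨1, by rw [LinearEquiv.transvection.apply, hPv, zero_smul, add_zero, one_smul]⟩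
  · induction P using Projectivization.ind with | h v hv =>
    rw [projMap_mk, onLine_mk, LinearEquiv.transvection.apply]
    exact M.add_mem ((onLine_mk hv).1 hP) (M.smul_mem _ (hRM hwR))

end Elation

section AffinePoints

/-- The point `(1 : a : z)` of the affine plane `X ≠ 0`. -/
def affinePt (a z : K) : Pt K := pt3 1 a z (by simp)

variable (K) in
/-- The point `(0 : 0 : 1)`, common to `X = 0` and all the lines `Y = aX`. -/
def nucleusPt : Pt K := pt3 0 0 1 (by simp)

variable {a b z : K}

theorem affinePt_injective (a : K) : Function.Injective (affinePt a) := by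
  intro z z' h
  obtain ⟨c, hc⟩ := (Projectivization.mk_eq_mk_iff' _ _ _ _ _).1 h
  have hc0 : c = 1 := by simpa using congrFun hc 0
  simpa [hc0, eq_comm] using congrFun hc 2

theorem not_onLine_lineX0_affinePt (a z : K) : ¬OnLine (affinePt a z) (lineX0 K) := by
  rw [affinePt, pt3, onLine_mk]
  simp [lineX0]

theorem exists_eq_affinePt {P : Pt K} (hP : ¬OnLine P (lineX0 K)) :
    ∃ a z, P = affinePt a z := by
  have hx : P.rep 0 ≠ 0 := fun h ↦ hP (onLine_iff_rep_mem.2 h)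
  refine ⟨P.rep 1 / P.rep 0, P.rep 2 / P.rep 0, ?_⟩
  rw [← P.mk_rep, affinePt, pt3, Projectivization.mk_eq_mk_iff']
  refine ⟨P.rep 0, funext fun i ↦ ?_⟩
  fin_cases i <;> simp [P.mk_rep, mul_div_cancel₀, hx]

theorem onLine_lineYaX_affinePt : OnLine (affinePt a z) (lineYaX b) ↔ a = b := by
  rw [affinePt, pt3, onLine_mk]
  simp [lineYaX]

theorem isLine_lineX0 : IsLine (lineX0 K) :=
  isLine_ker fun h ↦ one_ne_zero (LinearMap.congr_fun h ![1, 0, 0])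

theorem isLine_lineYaX (a : K) : IsLine (lineYaX a) := by
  let φ : Module.Dual K (Fin 3 → K) := LinearMap.proj 1 - a • LinearMap.proj 0
  have hker : lineYaX a = LinearMap.ker φ := by
    ext v
    exact sub_eq_zero.symm
  rw [hker]
  refine isLine_ker fun h ↦ one_ne_zero (α := K) ?_
  simpa [φ] using LinearMap.congr_fun h ![0, 1, 0]

theorem onLine_lineX0_nucleusPt : OnLine (nucleusPt K) (lineX0 K) := by
  rw [nucleusPt, pt3, onLine_mk]
  simp [lineX0]

theorem onLine_lineYaX_nucleusPt (a : K) : OnLine (nucleusPt K) (lineYaX a) := by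
  rw [nucleusPt, pt3, onLine_mk]
  simp [lineYaX]

theorem IsLine.eq_lineYaX {L : Submodule K (Fin 3 → K)} (hL : IsLine L)
    (hN : OnLine (nucleusPt K) L) (hP : OnLine (affinePt a z) L) : L = lineYaX a :=
  have hne : nucleusPt K ≠ affinePt a z := fun h ↦
    not_onLine_lineX0_affinePt a z (h ▸ onLine_lineX0_nucleusPt)
  hL.eq_of_onLine (isLine_lineYaX a) hne hN hP (onLine_lineYaX_nucleusPt a)
    (onLine_lineYaX_affinePt.2 rfl)

theorem eq_nucleusPt_of_onLine {P : Pt K} (hP : OnLine P (lineX0 K))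
    (hPa : OnLine P (lineYaX a)) : P = nucleusPt K := by
  by_contra hne
  refine not_onLine_lineX0_affinePt a 0 ?_
  rw [isLine_lineX0.eq_of_onLine (isLine_lineYaX a) hne hP onLine_lineX0_nucleusPt hPa
    (onLine_lineYaX_nucleusPt a)]
  exact onLine_lineYaX_affinePt.2 rfl

end AffinePoints

section Shear

variable {s a z z' : K} {f : (Fin 3 → K) ≃ₗ[K] (Fin 3 → K)} {A : Set (Pt K)}

/-- The linear map `(x, y, z) ↦ (x, y, z + s x)`, which induces the elation of axis `X = 0` and
centre `(0 : 0 : 1)` translating the affine plane `X ≠ 0` by `(0, s)`. -/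
def shear (s : K) : (Fin 3 → K) ≃ₗ[K] (Fin 3 → K) :=
  LinearEquiv.transvection (f := LinearMap.proj 0) (v := ![0, 0, s]) rfl

theorem shear_apply (s : K) (v : Fin 3 → K) : shear s v = v + v 0 • ![0, 0, s] := rfl

theorem projMap_shear_affinePt (s a z : K) :
    projMap (shear s) (affinePt a z) = affinePt a (z + s) := by
  simp [affinePt, pt3, projMap_mk, shear_apply]

theorem isElation_shear (s : K) : IsElation (shear s) (lineX0 K) (nucleusPt K) :=
  isElation_transvection (fun h ↦ one_ne_zero (LinearMap.congr_fun h ![1, 0, 0])) rfl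
    onLine_lineX0_nucleusPt <| by
      rw [nucleusPt, pt3, Projectivization.submodule_mk, Submodule.mem_span_singleton]
      exact ⟨s, by simp⟩

theorem IsElationAxis.projMap_eq_shear (hf : IsElationAxis f (lineX0 K))
    (h : projMap f (affinePt a z) = affinePt a z') : projMap f = projMap (shear (z' - z)) := by
  obtain ⟨R, hR⟩ := hf
  obtain ⟨c, w, hw, hfv⟩ := hR.exists_forall_apply_eq_smul_add
  have hw0 : w 0 = 0 := hw
  obtain ⟨k, hk⟩ := (Projectivization.mk_eq_mk_iff' _ _ _ _ _).1 h
  replace hk : k • ![1, a, z'] = c • ![1, a, z] + w := by simpa [hfv] using hk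
  have hkc : k = c := by simpa [hw0] using congrFun hk 0
  have hwz : w = c • ![0, 0, z' - z] := by
    rw [eq_sub_of_add_eq' hk.symm, hkc]
    simp [mul_sub]
  ext P
  induction P using Projectivization.ind with | h v hv =>
  rw [projMap_mk, projMap_mk, Projectivization.mk_eq_mk_iff']
  refine ⟨c, ?_⟩
  rw [hfv, shear_apply, hwz, smul_add, smul_comm c]
  rfl

end Shear

section Fibres

open scoped Pointwise

variable {t : ℕ} {A : Set (Pt K)} {a s z : K}

/-- The set of `z` with `(1 : a : z) ∈ A`: the affine part of `A` on the line `Y = aX`. -/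
def fibre (A : Set (Pt K)) (a : K) : Set K := {z | affinePt a z ∈ A}

/-- The group of those `s` for which the affine translation by `(0, s)` preserves every fibre of
`A`. It parametrises the elations with axis `X = 0` and centre `(0 : 0 : 1)` stabilising `A`. -/
def translationGroup (A : Set (Pt K)) : AddSubgroup K :=
  ⨅ a, AddAction.stabilizer K (fibre A a)

theorem mem_translationGroup :
    s ∈ translationGroup A ↔ ∀ a z, affinePt a (s + z) ∈ A ↔ affinePt a z ∈ A := by
  simp only [translationGroup, AddSubgroup.mem_iInf, AddAction.mem_stabilizer_set, vadd_eq_add]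
  rfl

theorem stabilises_shear_iff : Stabilises (shear s) A ↔ s ∈ translationGroup A := by
  rw [stabilises_iff, mem_translationGroup]
  refine ⟨fun h a z ↦ ?_, fun h P ↦ ?_⟩
  · rw [add_comm, ← projMap_shear_affinePt, h]
  · by_cases hP : OnLine P (lineX0 K)
    · rw [(isElation_shear s).2.2.1 P hP]
    · obtain ⟨a, z, rfl⟩ := exists_eq_affinePt hP
      rw [projMap_shear_affinePt, add_comm, h]

theorem secantCount_lineYaX (hN : nucleusPt K ∉ A) (a : K) :
    secantCount A (lineYaX a) = (fibre A a).ncard := by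
  have himage : {P ∈ A | OnLine P (lineYaX a)} = affinePt a '' fibre A a := by
    ext P
    constructor
    · rintro ⟨hPA, hPa⟩
      have hP : ¬OnLine P (lineX0 K) := fun hP ↦ hN (eq_nucleusPt_of_onLine hP hPa ▸ hPA)
      obtain ⟨b, z, rfl⟩ := exists_eq_affinePt hP
      obtain rfl := onLine_lineYaX_affinePt.1 hPa
      exact ⟨z, hPA, rfl⟩
    · rintro ⟨z, hz, rfl⟩
      exact ⟨hz, onLine_lineYaX_affinePt.2 rfl⟩
  rw [secantCount, himage, Set.ncard_image_of_injective _ (affinePt_injective a)]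

theorem ncard_fibre [Finite K] (ht : 2 < t) (hA : IsKMArc (Nat.card K) t A)
    (hnuc : IsNucleus t A (nucleusPt K)) (ha : (fibre A a).Nonempty) :
    (fibre A a).ncard = t := by
  obtain ⟨z, hz⟩ := ha
  rw [← secantCount_lineYaX (hA.nucleus_notMem ht hnuc)]
  exact hnuc.secantCount_eq ht hA hz (isLine_lineYaX a) (onLine_lineYaX_nucleusPt a)
    (onLine_lineYaX_affinePt.2 rfl)

theorem exists_fibre_nonempty [Finite K] (ht : 2 < t) (hA : IsKMArc (Nat.card K) t A) :
    ∃ a, (fibre A a).Nonempty := by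
  obtain ⟨P, hPA, hP⟩ := hA.exists_not_onLine ht isLine_lineX0
  obtain ⟨a, z, rfl⟩ := exists_eq_affinePt hP
  exact ⟨a, z, hPA⟩

theorem isElationKMArc_iff_sub_mem_translationGroup [Finite K] (ht : 2 < t)
    (hA : IsKMArc (Nat.card K) t A) (hnuc : IsNucleus t A (nucleusPt K)) :
    IsElationKMArc (Nat.card K) t A (nucleusPt K) (lineX0 K) ↔
      ∀ a, ∀ z ∈ fibre A a, ∀ z' ∈ fibre A a, z' - z ∈ translationGroup A := by
  have hN : nucleusPt K ∉ A := hA.nucleus_notMem ht hnuc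
  constructor
  · rintro ⟨-, -, -, -, htrans⟩ a z hz z' hz'
    have hsecant : secantCount A (lineYaX a) = t :=
      (secantCount_lineYaX hN a).trans (ncard_fibre ht hA hnuc ⟨z, hz⟩)
    have hne : lineYaX a ≠ lineX0 K := fun h ↦
      not_onLine_lineX0_affinePt a z (h ▸ onLine_lineYaX_affinePt.2 rfl)
    obtain ⟨f, hf, hfA, hfz⟩ := htrans _ (isLine_lineYaX a) hsecant hne
      _ hz (onLine_lineYaX_affinePt.2 rfl) _ hz' (onLine_lineYaX_affinePt.2 rfl)
    rwa [← stabilises_shear_iff, Stabilises, ← hf.projMap_eq_shear hfz]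
  · intro hsub
    refine ⟨hA, isLine_lineX0, onLine_lineX0_nucleusPt, hnuc, ?_⟩
    intro L hL hLt hLne P hPA hPL Q hQA hQL
    have hNL : OnLine (nucleusPt K) L := hnuc L hL hLt
    have haffine {P : Pt K} (hPA : P ∈ A) (hPL : OnLine P L) : ∃ a z, P = affinePt a z := by
      have hPN : P ≠ nucleusPt K := ne_of_mem_of_not_mem hPA hN
      exact exists_eq_affinePt fun hP ↦ hLne <|
        hL.eq_of_onLine isLine_lineX0 hPN hPL hNL hP onLine_lineX0_nucleusPt
    obtain ⟨a, z, rfl⟩ := haffine hPA hPL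
    obtain ⟨b, z', rfl⟩ := haffine hQA hQL
    obtain rfl : b = a := onLine_lineYaX_affinePt.1 (hL.eq_lineYaX hNL hPL ▸ hQL)
    exact ⟨shear (z' - z), ⟨_, isElation_shear _⟩,
      stabilises_shear_iff.2 (hsub b z hPA z' hQA), by
        rw [projMap_shear_affinePt, add_sub_cancel]⟩

theorem fibre_eq_vadd_translationGroup (hz : z ∈ fibre A a)
    (hsub : ∀ z' ∈ fibre A a, z' - z ∈ translationGroup A) :
    fibre A a = z +ᵥ (translationGroup A : Set K) := by
  ext z'
  rw [Set.mem_vadd_set_iff_neg_vadd_mem, vadd_eq_add, neg_add_eq_sub, SetLike.mem_coe]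
  refine ⟨hsub z', fun hz' ↦ ?_⟩
  have := (mem_translationGroup.1 hz' a z).2 hz
  rwa [sub_add_cancel] at this

theorem le_translationGroup {S : AddSubgroup K}
    (hS : ∀ a, fibre A a = ∅ ∨ ∃ b : K, fibre A a = b +ᵥ (S : Set K)) :
    S ≤ translationGroup A := by
  refine le_iInf fun a ↦ ?_
  rcases hS a with h | ⟨b, h⟩
  · rw [h, AddAction.stabilizer_empty]
    exact le_top
  · rw [h, AddAction.stabilizer_vadd_eq_right, AddAction.stabilizer_addSubgroup]

theorem forall_sub_mem_translationGroup_iff [Finite K] (ht : 2 < t)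
    (hA : IsKMArc (Nat.card K) t A) (hnuc : IsNucleus t A (nucleusPt K)) :
    (∀ a, ∀ z ∈ fibre A a, ∀ z' ∈ fibre A a, z' - z ∈ translationGroup A) ↔
      ∃ S : AddSubgroup K, Nat.card S = t ∧
        ∀ a, fibre A a = ∅ ∨ ∃ b : K, fibre A a = b +ᵥ (S : Set K) := by
  constructor
  · intro hsub
    have hcoset (a z : K) (hz : z ∈ fibre A a) :
        fibre A a = z +ᵥ (translationGroup A : Set K) :=
      fibre_eq_vadd_translationGroup hz (hsub a z hz)
    refine ⟨translationGroup A, ?_, fun a ↦ (fibre A a).eq_empty_or_nonempty.imp_right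
      fun ⟨z, hz⟩ ↦ ⟨z, hcoset a z hz⟩⟩
    obtain ⟨a, z, hz⟩ := exists_fibre_nonempty ht hA
    rw [← ncard_fibre ht hA hnuc ⟨z, hz⟩, hcoset a z hz, Set.ncard_vadd_set]
    rfl
  · rintro ⟨S, -, hS⟩ a z hz z' hz'
    refine le_translationGroup hS ?_
    rcases hS a with h | ⟨b, h⟩
    · exact absurd hz (h ▸ Set.notMem_empty z)
    · rw [h, Set.mem_vadd_set_iff_neg_vadd_mem] at hz hz'
      simpa using S.sub_mem hz' hz

end Fibres

theorem elation_iff_coset_general {K : Type*} [Field K] [Finite K] {t : ℕ} (ht : 2 < t)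
    {A : Set (Pt K)} (hA : IsKMArc (Nat.card K) t A)
    (hnuc : IsNucleus t A (pt3 (0 : K) 0 1 (by simp))) :
    IsElationKMArc (Nat.card K) t A (pt3 (0 : K) 0 1 (by simp)) (lineX0 K)
      ↔ ∃ S : AddSubgroup K, Nat.card S = t ∧
          ∀ α : K, {z : K | pt3 1 α z (by simp) ∈ A} = ∅ ∨
            ∃ β : K, {z : K | pt3 1 α z (by simp) ∈ A} = (fun s => β + s) '' (S : Set K) :=
  (isElationKMArc_iff_sub_mem_translationGroup ht hA hnuc).trans
    (forall_sub_mem_translationGroup_iff ht hA hnuc)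

/-- a KM-arc of type `2 < t < q` with `t`-nucleus `(0:0:1)` is an elation
KM-arc with elation line `X = 0` iff there is an additive subgroup `S` of order `t` such
that for each `α` the set `{z | (1:α:z) ∈ A}` is empty or a coset of `S`. -/
theorem elation_iff_coset
    {K : Type*} [Field K] [Fintype K] (h t : ℕ)
    (hcard : Fintype.card K = 2 ^ h)
    (ht2 : 2 < t) (htq : t < 2 ^ h)
    (A : Set (Pt K))
    (hA : IsKMArc (2 ^ h) t A)
    (hnuc : IsNucleus t A (pt3 (0 : K) 0 1 (by simp))) :
    IsElationKMArc (2 ^ h) t A (pt3 (0 : K) 0 1 (by simp)) (lineX0 K)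
      ↔ ∃ S : AddSubgroup K, Nat.card S = t ∧
          ∀ α : K, {z : K | pt3 1 α z (by simp) ∈ A} = ∅ ∨
            ∃ β : K, {z : K | pt3 1 α z (by simp) ∈ A} = (fun s => β + s) '' (S : Set K) := by
  rw [← hcard, ← Nat.card_eq_fintype_card] at hA ⊢
  exact elation_iff_coset_general ht2 hA hnuc
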